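/- If 0<d₁<d₂≤1, then the minimal energies satisfy the strict inequality J_{d₁}(φ̄_{d₁}) > J_{d₂}(φ̄_{d₂}). -/

import Mathlib

open Real Set MeasureTheory

noncomputable section

/-- `φ` solves the boundary value problem `φ'' = f(φ)` on `(0,d)`, `φ(0) = 0`,
`φ(d) = Q`, `0 < φ < Q` on `(0,d)`, with `φ ∈ C²((0,d)) ∩ C¹([0,d])`. -/
def IsBVPSol (Q : ℝ) (f : ℝ → ℝ) (d : ℝ) (φ : ℝ → ℝ) : Prop :=
  ContDiffOn ℝ 1 φ (Set.Icc 0 d) ∧ ContDiffOn ℝ 2 φ (Set.Ioo 0 d) ∧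
  (∀ x ∈ Set.Ioo (0 : ℝ) d, deriv (deriv φ) x = f (φ x)) ∧
  φ 0 = 0 ∧ φ d = Q ∧ (∀ x ∈ Set.Ioo (0 : ℝ) d, 0 < φ x ∧ φ x < Q)

/-- A function continuous on `[a,b]` with derivative zero on `(a,b)` is constant on `[a,b]`. -/
lemma eq_left_of_hasDerivAt_zero {h : ℝ → ℝ} {a b : ℝ} (hc : ContinuousOn h (Icc a b))
    (hd : ∀ x ∈ Ioo a b, HasDerivAt h 0 x) {x : ℝ} (hx : x ∈ Icc a b) : h x = h a := by
  have := intervalIntegral.integral_eq_sub_of_hasDerivAt_of_le (f' := fun _ => (0 : ℝ)) hx.1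
    (hc.mono (Icc_subset_Icc_right hx.2)) (fun y hy => hd y ⟨hy.1, hy.2.trans_le hx.2⟩)
    (by simp)
  simp at this
  linarith

/-- The cubic `Q(3t² - 2t³)`. -/
def cubicProfile (Q t : ℝ) : ℝ := Q * (3 * t ^ 2 - 2 * t ^ 3)

lemma hasDerivAt_cubicProfile (Q t : ℝ) :
    HasDerivAt (cubicProfile Q) (6 * Q * (t * (1 - t))) t := by
  have h := ((((hasDerivAt_id t).pow 2).const_mul 3).sub
    (((hasDerivAt_id t).pow 3).const_mul 2)).const_mul Q
  refine h.congr_deriv ?_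
  simp
  ring

lemma continuous_cubicProfile (Q : ℝ) : Continuous (cubicProfile Q) := by
  unfold cubicProfile
  fun_prop

lemma cubicProfile_zero (Q : ℝ) : cubicProfile Q 0 = 0 := by simp [cubicProfile]

lemma cubicProfile_one (Q : ℝ) : cubicProfile Q 1 = Q := by norm_num [cubicProfile]

lemma strictMonoOn_cubicProfile {Q : ℝ} (hQ : 0 < Q) :
    StrictMonoOn (cubicProfile Q) (Icc 0 1) := by
  refine strictMonoOn_of_deriv_pos (convex_Icc 0 1) (continuous_cubicProfile Q).continuousOn ?_
  intro t ht
  rw [interior_Icc] at ht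
  rw [(hasDerivAt_cubicProfile Q t).deriv]
  have := ht.1
  have : 0 < 1 - t := sub_pos.2 ht.2
  positivity

lemma image_cubicProfile {Q : ℝ} (hQ : 0 < Q) : cubicProfile Q '' Icc 0 1 = Icc 0 Q := by
  have h := (continuous_cubicProfile Q).continuousOn.image_Icc_of_monotoneOn
    zero_le_one (strictMonoOn_cubicProfile hQ).monotoneOn
  rwa [cubicProfile_zero, cubicProfile_one] at h

section Inverse

variable {Q : ℝ} {κ : ℝ → ℝ}

lemma inverse_mem_and_cubicProfile_inverse (hQ : 0 < Q)
    (hκ : ∀ t ∈ Icc (0 : ℝ) 1, κ (cubicProfile Q t) = t) {s : ℝ} (hs : s ∈ Icc 0 Q) :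
    κ s ∈ Icc (0 : ℝ) 1 ∧ cubicProfile Q (κ s) = s := by
  rw [← image_cubicProfile hQ] at hs
  obtain ⟨t, ht, rfl⟩ := hs
  rw [hκ t ht]
  exact ⟨ht, rfl⟩

lemma continuousOn_inverse (hQ : 0 < Q)
    (hκ : ∀ t ∈ Icc (0 : ℝ) 1, κ (cubicProfile Q t) = t) : ContinuousOn κ (Icc 0 Q) := by
  rw [continuousOn_iff_isClosed]
  intro C hC
  refine ⟨cubicProfile Q '' (C ∩ Icc 0 1), ?_, ?_⟩
  · exact ((isCompact_Icc.inter_left hC).image (continuous_cubicProfile Q)).isClosed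
  · ext s
    constructor
    · rintro ⟨hsC, hs⟩
      obtain ⟨h1, h2⟩ := inverse_mem_and_cubicProfile_inverse hQ hκ hs
      exact ⟨⟨κ s, ⟨hsC, h1⟩, h2⟩, hs⟩
    · rintro ⟨⟨t, ⟨htC, ht⟩, rfl⟩, hs⟩
      refine ⟨?_, hs⟩
      rwa [mem_preimage, hκ t ht]

lemma inverse_mem_Ioo (hQ : 0 < Q)
    (hκ : ∀ t ∈ Icc (0 : ℝ) 1, κ (cubicProfile Q t) = t) {s : ℝ} (hs : s ∈ Ioo 0 Q) :
    κ s ∈ Ioo (0 : ℝ) 1 := by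
  obtain ⟨h1, h2⟩ := inverse_mem_and_cubicProfile_inverse hQ hκ (Ioo_subset_Icc_self hs)
  refine ⟨h1.1.lt_of_ne ?_, h1.2.lt_of_ne ?_⟩
  · intro h
    rw [← h, cubicProfile_zero] at h2
    exact hs.1.ne h2
  · intro h
    rw [h, cubicProfile_one] at h2
    exact hs.2.ne h2.symm

lemma hasDerivAt_inverse (hQ : 0 < Q)
    (hκ : ∀ t ∈ Icc (0 : ℝ) 1, κ (cubicProfile Q t) = t) {s : ℝ} (hs : s ∈ Ioo 0 Q) :
    HasDerivAt κ (6 * Q * (κ s * (1 - κ s)))⁻¹ s := by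
  obtain ⟨h0, h1⟩ := inverse_mem_Ioo hQ hκ hs
  have h1' : 0 < 1 - κ s := sub_pos.2 h1
  refine HasDerivAt.of_local_left_inverse
    ((continuousOn_inverse hQ hκ).continuousAt (Icc_mem_nhds hs.1 hs.2))
    (hasDerivAt_cubicProfile Q (κ s)) (by positivity) ?_
  filter_upwards [Icc_mem_nhds hs.1 hs.2] with y hy
  exact (inverse_mem_and_cubicProfile_inverse hQ hκ hy).2

end Inverse

section Potential

variable {Q : ℝ} {κ f F : ℝ → ℝ}

lemma continuous_potential (hfc : ContinuousOn f (Icc 0 Q))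
    (hF : ∀ t : ℝ, F t = ∫ s in (0 : ℝ)..t, indicator (Icc 0 Q) f s) : Continuous F := by
  rw [funext hF]
  have hi : Integrable (indicator (Icc 0 Q) f) :=
    (integrable_indicator_iff measurableSet_Icc).2 (hfc.integrableOn_compact isCompact_Icc)
  exact intervalIntegral.continuous_primitive (fun a b => hi.intervalIntegrable) 0

lemma hasDerivAt_potential (hfc : ContinuousOn f (Icc 0 Q))
    (hF : ∀ t : ℝ, F t = ∫ s in (0 : ℝ)..t, indicator (Icc 0 Q) f s) {s : ℝ}
    (hs : s ∈ Ioo 0 Q) : HasDerivAt F (f s) s := by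
  rw [funext hF]
  have hi : Integrable (indicator (Icc 0 Q) f) :=
    (integrable_indicator_iff measurableSet_Icc).2 (hfc.integrableOn_compact isCompact_Icc)
  have hs' : Icc 0 Q ∈ nhds s := Icc_mem_nhds hs.1 hs.2
  have heq : indicator (Icc 0 Q) f =ᶠ[nhds s] f := by
    filter_upwards [hs'] with y hy
    exact indicator_of_mem hy f
  have hc : ContinuousAt (indicator (Icc 0 Q) f) s := (hfc.continuousAt hs').congr heq.symm
  have h := intervalIntegral.integral_hasDerivAt_right (hi.intervalIntegrable (a := 0) (b := s))
    hi.aestronglyMeasurable.stronglyMeasurableAtFilter hc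
  rwa [heq.eq_of_nhds] at h

lemma continuousOn_force (hQ : 0 < Q)
    (hκ : ∀ t ∈ Icc (0 : ℝ) 1, κ (cubicProfile Q t) = t)
    (hf : ∀ s : ℝ, f s = 6 * Q * (1 - 2 * κ s)) : ContinuousOn f (Icc 0 Q) := by
  rw [funext hf]
  have := continuousOn_inverse hQ hκ
  fun_prop

lemma potential_cubicProfile (hQ : 0 < Q)
    (hκ : ∀ t ∈ Icc (0 : ℝ) 1, κ (cubicProfile Q t) = t)
    (hf : ∀ s : ℝ, f s = 6 * Q * (1 - 2 * κ s))
    (hF : ∀ t : ℝ, F t = ∫ s in (0 : ℝ)..t, indicator (Icc 0 Q) f s) {t : ℝ}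
    (ht : t ∈ Icc (0 : ℝ) 1) : F (cubicProfile Q t) = (6 * Q * (t * (1 - t))) ^ 2 / 2 := by
  have hfc := continuousOn_force hQ hκ hf
  have hFc := continuous_potential hfc hF
  have hpc := continuous_cubicProfile Q
  have h := eq_left_of_hasDerivAt_zero
    (h := fun t => F (cubicProfile Q t) - (6 * Q * (t * (1 - t))) ^ 2 / 2) (a := 0) (b := 1)
    (by fun_prop) ?_ ht
  · have hF0 : F 0 = 0 := by simp [hF]
    simp only [cubicProfile_zero, hF0] at h
    linarith
  · intro y hy
    have hy' := Ioo_subset_Icc_self hy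
    have hmem : cubicProfile Q y ∈ Ioo 0 Q := by
      have h0 := strictMonoOn_cubicProfile hQ (left_mem_Icc.2 zero_le_one) hy' hy.1
      have h1 := strictMonoOn_cubicProfile hQ hy' (right_mem_Icc.2 zero_le_one) hy.2
      rw [cubicProfile_zero] at h0
      rw [cubicProfile_one] at h1
      exact ⟨h0, h1⟩
    have h1 := (hasDerivAt_potential hfc hF hmem).comp y (hasDerivAt_cubicProfile Q y)
    have h2 := (((((hasDerivAt_id y).mul ((hasDerivAt_id y).const_sub 1)).const_mul
      (6 * Q)).pow 2).div_const 2)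
    refine (h1.sub h2).congr_deriv ?_
    rw [hf, hκ y hy']
    simp
    ring

lemma potential_eq (hQ : 0 < Q)
    (hκ : ∀ t ∈ Icc (0 : ℝ) 1, κ (cubicProfile Q t) = t)
    (hf : ∀ s : ℝ, f s = 6 * Q * (1 - 2 * κ s))
    (hF : ∀ t : ℝ, F t = ∫ s in (0 : ℝ)..t, indicator (Icc 0 Q) f s) {s : ℝ}
    (hs : s ∈ Icc 0 Q) : F s = (6 * Q * (κ s * (1 - κ s))) ^ 2 / 2 := by
  obtain ⟨h1, h2⟩ := inverse_mem_and_cubicProfile_inverse hQ hκ hs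
  rw [← potential_cubicProfile hQ hκ hf hF h1, h2]

lemma potential_pos (hQ : 0 < Q)
    (hκ : ∀ t ∈ Icc (0 : ℝ) 1, κ (cubicProfile Q t) = t)
    (hf : ∀ s : ℝ, f s = 6 * Q * (1 - 2 * κ s))
    (hF : ∀ t : ℝ, F t = ∫ s in (0 : ℝ)..t, indicator (Icc 0 Q) f s) {s : ℝ}
    (hs : s ∈ Ioo 0 Q) : 0 < F s := by
  rw [potential_eq hQ hκ hf hF (Ioo_subset_Icc_self hs)]
  obtain ⟨h0, h1⟩ := inverse_mem_Ioo hQ hκ hs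
  have h1' : 0 < 1 - κ s := sub_pos.2 h1
  positivity

end Potential

namespace IsBVPSol

variable {Q d : ℝ} {f φ : ℝ → ℝ}

lemma hasDerivAt (h : IsBVPSol Q f d φ) {x : ℝ} (hx : x ∈ Ioo 0 d) :
    HasDerivAt φ (deriv φ x) x :=
  ((h.1.differentiableOn one_ne_zero).differentiableAt (Icc_mem_nhds hx.1 hx.2)).hasDerivAt

lemma hasDerivAt_deriv (h : IsBVPSol Q f d φ) {x : ℝ} (hx : x ∈ Ioo 0 d) :
    HasDerivAt (deriv φ) (f (φ x)) x := by
  rw [← h.2.2.1 x hx]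
  have h1 : ContDiffOn ℝ 1 (deriv φ) (Ioo 0 d) :=
    h.2.1.deriv_of_isOpen isOpen_Ioo (by norm_num)
  exact ((h1.differentiableOn one_ne_zero).differentiableAt
    (isOpen_Ioo.mem_nhds hx)).hasDerivAt

lemma mem_Icc (h : IsBVPSol Q f d φ) (hQ : 0 < Q) {x : ℝ} (hx : x ∈ Icc 0 d) :
    φ x ∈ Icc 0 Q := by
  obtain ⟨-, -, -, h0, hd, hI⟩ := h
  rcases eq_or_lt_of_le hx.1 with rfl | hx0
  · rw [h0]
    exact ⟨le_rfl, hQ.le⟩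
  rcases eq_or_lt_of_le hx.2 with rfl | hxd
  · rw [hd]
    exact ⟨hQ.le, le_rfl⟩
  exact ⟨(hI x ⟨hx0, hxd⟩).1.le, (hI x ⟨hx0, hxd⟩).2.le⟩

/-- The derivative on the open interval extends continuously to the closed one. -/
lemma exists_continuousOn_eq_deriv (h : IsBVPSol Q f d φ) (hd : 0 < d) :
    ∃ D : ℝ → ℝ, ContinuousOn D (Icc 0 d) ∧ ∀ x ∈ Ioo 0 d, deriv φ x = D x :=
  ⟨derivWithin φ (Icc 0 d), h.1.continuousOn_derivWithin (uniqueDiffOn_Icc hd) le_rfl,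
    fun _ hx => (derivWithin_of_mem_nhds (Icc_mem_nhds hx.1 hx.2)).symm⟩

variable {F : ℝ → ℝ}

/-- Conservation of energy, integrated once: a solution satisfies `φ' = √(2(E + F(φ)))` for some
constant `E ≥ 0`. -/
lemma exists_deriv_eq_sqrt (h : IsBVPSol Q f d φ) (hQ : 0 < Q) (hd : 0 < d)
    (hFc : Continuous F) (hF0 : F 0 = 0) (hFpos : ∀ s ∈ Ioo 0 Q, 0 < F s)
    (hFd : ∀ s ∈ Ioo 0 Q, HasDerivAt F (f s) s) :
    ∃ E, 0 ≤ E ∧ ∀ x ∈ Ioo 0 d, deriv φ x = √(2 * (E + F (φ x))) := by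
  obtain ⟨D, hDc, hD⟩ := h.exists_continuousOn_eq_deriv hd
  have hφc : ContinuousOn φ (Icc 0 d) := h.1.continuousOn
  have hDd : ∀ x ∈ Ioo 0 d, HasDerivAt D (f (φ x)) x := fun x hx =>
    (h.hasDerivAt_deriv hx).congr_of_eventuallyEq <| by
      filter_upwards [isOpen_Ioo.mem_nhds hx] with y hy
      exact (hD y hy).symm
  have hI : ∀ x ∈ Ioo 0 d, φ x ∈ Ioo 0 Q := h.2.2.2.2.2
  have hcons : ∀ x ∈ Icc 0 d, D x ^ 2 / 2 - F (φ x) = D 0 ^ 2 / 2 := by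
    intro x hx
    have := eq_left_of_hasDerivAt_zero (h := fun x => D x ^ 2 / 2 - F (φ x))
      (by fun_prop) (fun y hy => ?_) hx
    · simpa [h.2.2.2.1, hF0] using this
    · have h1 := ((hDd y hy).pow 2).div_const 2
      have h2 := (hFd _ (hI y hy)).comp y (h.hasDerivAt hy)
      refine (h1.sub h2).congr_deriv ?_
      rw [hD y hy]
      simp
      ring
  have hne : ∀ x ∈ Ioo 0 d, D x ≠ 0 := by
    intro x hx hx0
    have h1 := hcons x (Ioo_subset_Icc_self hx)
    have h2 := hFpos _ (hI x hx)
    rw [hx0] at h1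
    nlinarith [sq_nonneg (D 0)]
  obtain ⟨c, hc, hcs⟩ := exists_hasDerivAt_eq_slope φ (deriv φ) hd hφc
    fun x hx => h.hasDerivAt hx
  have hcpos : 0 < D c := by
    rw [← hD c hc, hcs, h.2.2.2.1, h.2.2.2.2.1]
    simp only [sub_zero]
    positivity
  have hpos : ∀ x ∈ Ioo 0 d, 0 < D x := by
    intro x hx
    by_contra hx0
    obtain ⟨z, hz, hz0⟩ := (isPreconnected_Ioo.intermediate_value hx hc
      (hDc.mono Ioo_subset_Icc_self)) ⟨not_lt.1 hx0, hcpos.le⟩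
    exact hne z hz hz0
  refine ⟨D 0 ^ 2 / 2, by positivity, fun x hx => ?_⟩
  rw [← hcons x (Ioo_subset_Icc_self hx), hD x hx, ← Real.sqrt_sq (hpos x hx).le]
  congr 1
  rw [Real.sq_sqrt (sq_nonneg _)]
  ring

lemma intervalIntegrable_comp (h : IsBVPSol Q f d φ) (hd : 0 < d) {g : ℝ → ℝ → ℝ}
    (hg : Continuous fun p : ℝ × ℝ => g p.1 p.2) :
    IntervalIntegrable (fun s => g (deriv φ s) (φ s)) volume 0 d := by
  obtain ⟨D, hDc, hD⟩ := h.exists_continuousOn_eq_deriv hd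
  have hc : ContinuousOn (fun s => g (D s) (φ s)) (Icc 0 d) :=
    hg.comp_continuousOn (hDc.prodMk h.1.continuousOn)
  rw [intervalIntegrable_iff_integrableOn_Ioo_of_le hd.le]
  refine ((hc.integrableOn_Icc).mono_set Ioo_subset_Icc_self).congr_fun ?_ measurableSet_Ioo
  intro x hx
  simp only [hD x hx]

lemma intervalIntegrable_energy (h : IsBVPSol Q f d φ) (hd : 0 < d) (hFc : Continuous F) :
    IntervalIntegrable (fun s => deriv φ s ^ 2 / 2 + F (φ s)) volume 0 d :=
  h.intervalIntegrable_comp hd (g := fun v y => v ^ 2 / 2 + F y) (by fun_prop)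

lemma intervalIntegrable_comp_mul_deriv (h : IsBVPSol Q f d φ) (hd : 0 < d) {g : ℝ → ℝ}
    (hg : Continuous g) : IntervalIntegrable (fun s => g (φ s) * deriv φ s) volume 0 d :=
  h.intervalIntegrable_comp hd (g := fun v y => g y * v) (by fun_prop)

lemma integral_comp_mul_deriv (h : IsBVPSol Q f d φ) (hd : 0 < d) {g : ℝ → ℝ}
    (hg : Continuous g) : ∫ s in 0..d, g (φ s) * deriv φ s = ∫ s in 0..Q, g s := by
  have hG : ∀ t, HasDerivAt (fun t => ∫ s in 0..t, g s) (g t) t := fun t =>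
    (hg.integral_hasStrictDerivAt 0 t).hasDerivAt
  have hGc : Continuous fun t => ∫ s in 0..t, g s :=
    continuous_iff_continuousAt.2 fun t => (hG t).continuousAt
  rw [intervalIntegral.integral_eq_sub_of_hasDerivAt_of_le hd.le
    (hGc.comp_continuousOn h.1.continuousOn)
    (fun x hx => (hG (φ x)).comp x (h.hasDerivAt hx)) (h.intervalIntegrable_comp_mul_deriv hd hg)]
  simp [h.2.2.2.1, h.2.2.2.2.1]

/-- The energy gap in the calibration inequality
`φ'²/2 + F(φ) + E ≥ √(2(E + F(φ))) φ'`. -/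
lemma energy_add_sub_integral_sqrt (h : IsBVPSol Q f d φ) (hQ : 0 < Q) (hd : 0 < d)
    (hFc : Continuous F) (hFnn : ∀ s ∈ Icc 0 Q, 0 ≤ F s) {E : ℝ} (hE : 0 ≤ E) :
    (∫ s in 0..d, (deriv φ s ^ 2 / 2 + F (φ s))) + E * d - ∫ s in 0..Q, √(2 * (E + F s)) =
      ∫ s in 0..d, (deriv φ s - √(2 * (E + F (φ s)))) ^ 2 / 2 := by
  have hg : Continuous fun s => √(2 * (E + F s)) := by fun_prop
  have hJ := h.intervalIntegrable_energy hd hFc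
  have hc : IntervalIntegrable (fun _ : ℝ => E) volume 0 d := intervalIntegrable_const
  rw [← h.integral_comp_mul_deriv hd hg]
  have hconst : E * d = ∫ _ in (0 : ℝ)..d, E := by simp [mul_comm]
  rw [hconst, ← intervalIntegral.integral_add hJ hc,
    ← intervalIntegral.integral_sub (hJ.add hc) (h.intervalIntegrable_comp_mul_deriv hd hg)]
  refine intervalIntegral.integral_congr fun x hx => ?_
  rw [uIcc_of_le hd.le] at hx
  have hnn := hFnn _ (h.mem_Icc hQ hx)
  have hsq := Real.sq_sqrt (show 0 ≤ 2 * (E + F (φ x)) by positivity)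
  linear_combination -hsq / 2

lemma intervalIntegrable_sub_sq (h : IsBVPSol Q f d φ) (hd : 0 < d) {g : ℝ → ℝ}
    (hg : Continuous g) :
    IntervalIntegrable (fun s => (deriv φ s - g (φ s)) ^ 2 / 2) volume 0 d :=
  h.intervalIntegrable_comp hd (g := fun v y => (v - g y) ^ 2 / 2) (by fun_prop)

/-- The solution with zero first integral lives on the unit interval. -/
lemma length_eq_one_of_deriv_eq_sqrt {κ : ℝ → ℝ} (h : IsBVPSol Q f d φ) (hQ : 0 < Q)
    (hd : 0 < d) (hκ : ∀ t ∈ Icc (0 : ℝ) 1, κ (cubicProfile Q t) = t)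
    (hf : ∀ s : ℝ, f s = 6 * Q * (1 - 2 * κ s))
    (hF : ∀ t : ℝ, F t = ∫ s in (0 : ℝ)..t, indicator (Icc 0 Q) f s)
    (hφ : ∀ x ∈ Ioo 0 d, deriv φ x = √(2 * F (φ x))) : d = 1 := by
  have hu : ∀ x ∈ Ioo 0 d, HasDerivAt (κ ∘ φ) 1 x := by
    intro x hx
    have hmem : φ x ∈ Ioo 0 Q := h.2.2.2.2.2 x hx
    obtain ⟨h0, h1⟩ := inverse_mem_Ioo hQ hκ hmem
    have h1' : 0 < 1 - κ (φ x) := sub_pos.2 h1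
    refine ((hasDerivAt_inverse hQ hκ hmem).comp x (h.hasDerivAt hx)).congr_deriv ?_
    rw [hφ x hx, potential_eq hQ hκ hf hF (Ioo_subset_Icc_self hmem),
      mul_div_cancel₀ _ two_ne_zero, Real.sqrt_sq (by positivity)]
    exact inv_mul_cancel₀ (by positivity)
  have hc : ContinuousOn (κ ∘ φ) (Icc 0 d) :=
    (continuousOn_inverse hQ hκ).comp h.1.continuousOn fun x hx => h.mem_Icc hQ hx
  have hint := intervalIntegral.integral_eq_sub_of_hasDerivAt_of_le hd.le hc hu (by simp)
  have h0 := hκ 0 (by simp)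
  have h1 := hκ 1 (by simp)
  rw [cubicProfile_zero] at h0
  rw [cubicProfile_one] at h1
  simpa [h.2.2.2.1, h.2.2.2.2.1, h0, h1] using hint

end IsBVPSol

/-- Strict monotonicity of the minimal energy: if `0 < d₁ < d₂ ≤ 1` then
`J_{d₁}(φ̄_{d₁}) > J_{d₂}(φ̄_{d₂})`. -/
theorem stmt11
    (Q : ℝ) (hQ : 0 < Q)
    (κ : ℝ → ℝ) (hκ : ∀ t ∈ Set.Icc (0 : ℝ) 1, κ (Q * (3 * t ^ 2 - 2 * t ^ 3)) = t)
    (f : ℝ → ℝ) (hf : ∀ s : ℝ, f s = 6 * Q * (1 - 2 * κ s))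
    (F : ℝ → ℝ) (hF : ∀ t : ℝ, F t = ∫ s in (0 : ℝ)..t, Set.indicator (Set.Icc 0 Q) f s)
    (d₁ d₂ : ℝ) (hd₁ : 0 < d₁) (hd₁₂ : d₁ < d₂) (hd₂ : d₂ ≤ 1)
    (φd₁ φd₂ : ℝ → ℝ) (hφd₁ : IsBVPSol Q f d₁ φd₁) (hφd₂ : IsBVPSol Q f d₂ φd₂) :
    (∫ s in (0 : ℝ)..d₂, ((deriv φd₂ s) ^ 2 / 2 + F (φd₂ s))) <
      ∫ s in (0 : ℝ)..d₁, ((deriv φd₁ s) ^ 2 / 2 + F (φd₁ s)) := by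
  have hκ' : ∀ t ∈ Icc (0 : ℝ) 1, κ (cubicProfile Q t) = t := hκ
  have hfc := continuousOn_force hQ hκ' hf
  have hFc := continuous_potential hfc hF
  have hF0 : F 0 = 0 := by simp [hF]
  have hFpos : ∀ s ∈ Ioo 0 Q, 0 < F s := fun s hs => potential_pos hQ hκ' hf hF hs
  have hFnn : ∀ s ∈ Icc 0 Q, 0 ≤ F s := fun s hs => by
    rw [potential_eq hQ hκ' hf hF hs]
    positivity
  have hFd : ∀ s ∈ Ioo 0 Q, HasDerivAt F (f s) s := fun s hs => hasDerivAt_potential hfc hF hs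
  have hd₂pos : 0 < d₂ := hd₁.trans hd₁₂
  obtain ⟨E₁, hE₁, hφ₁⟩ := hφd₁.exists_deriv_eq_sqrt hQ hd₁ hFc hF0 hFpos hFd
  obtain ⟨E₂, hE₂, hφ₂⟩ := hφd₂.exists_deriv_eq_sqrt hQ hd₂pos hFc hF0 hFpos hFd
  have gap₁ := hφd₁.energy_add_sub_integral_sqrt hQ hd₁ hFc hFnn hE₂
  have gap₂ := hφd₂.energy_add_sub_integral_sqrt hQ hd₂pos hFc hFnn hE₂
  have gap₂_zero : ∫ s in 0..d₂, (deriv φd₂ s - √(2 * (E₂ + F (φd₂ s)))) ^ 2 / 2 = 0 := by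
    rw [intervalIntegral.integral_of_le hd₂pos.le, integral_Ioc_eq_integral_Ioo]
    refine setIntegral_eq_zero_of_forall_eq_zero fun x hx => ?_
    rw [hφ₂ x hx]
    simp
  rw [gap₂_zero] at gap₂
  rcases hE₂.eq_or_lt with rfl | hE₂pos
  · have hE₁pos : 0 < E₁ := by
      refine hE₁.lt_of_ne ?_
      rintro rfl
      have := hφd₁.length_eq_one_of_deriv_eq_sqrt hQ hd₁ hκ' hf hF (by simpa using hφ₁)
      linarith
    have hpos : 0 < ∫ s in 0..d₁, (deriv φd₁ s - √(2 * (0 + F (φd₁ s)))) ^ 2 / 2 := by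
      refine intervalIntegral.intervalIntegral_pos_of_pos_on ?_ (fun x hx => ?_) hd₁
      · exact hφd₁.intervalIntegrable_sub_sq hd₁ (g := fun s => √(2 * (0 + F s))) (by fun_prop)
      · have hFx := hFpos _ (hφd₁.2.2.2.2.2 x hx)
        have := Real.sqrt_lt_sqrt (x := 2 * (0 + F (φd₁ x))) (by positivity)
          (show 2 * (0 + F (φd₁ x)) < 2 * (E₁ + F (φd₁ x)) by linarith)
        rw [hφ₁ x hx]
        have := sub_pos.2 this
        positivity
    linarith
  · have hnn : 0 ≤ ∫ s in 0..d₁, (deriv φd₁ s - √(2 * (E₂ + F (φd₁ s)))) ^ 2 / 2 :=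
      intervalIntegral.integral_nonneg hd₁.le fun x _ => by positivity
    have := mul_pos hE₂pos (sub_pos.2 hd₁₂)
    linarith
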